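/- arXiv:2202.01754 — 2 statements merged into one kernel-verified Lean document; each statement's English description precedes it below -/
import Mathlib

section
/- Let φ, χ : (0, 1] → ℂ both be continuously differentiable, assume that the maps s ↦ s³φ′(s) and s ↦ s³χ′(s) are continuously differentiable on (0, 1], and assume the integrability conditions ∫₀¹ s³|φ(s)|² ds < ∞, ∫₀¹ s⁻³ |(d/ds)(s³φ′(s))|² ds < ∞, ∫₀¹ s³|χ(s)|² ds < ∞, and ∫₀¹ s⁻³ |(d/ds)(s³χ′(s))|² ds < ∞. Then lim_{s→0⁺} ( s³φ′(s)·conj(χ(s)) − φ(s)·s³·conj(χ′(s)) ) = 0. -/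
open Set MeasureTheory Filter

/-- `φ : (0,1] → ℂ` is continuously differentiable with derivative `φ₁`, the map
`s ↦ s³ φ₁ s` is continuously differentiable with derivative `g`, and both `φ` and
`s ↦ s⁻³ g s` belong to the weighted space `L²((0,1), s³ ds)` (a smooth-representative
version of the domain of the singular Sturm–Liouville operator `T`). -/
def MemDomT (φ φ₁ g : ℝ → ℂ) : Prop :=
  (∀ s ∈ Ioc (0:ℝ) 1, HasDerivWithinAt φ (φ₁ s) (Ioc 0 1) s) ∧
  ContinuousOn φ₁ (Ioc 0 1) ∧
  (∀ s ∈ Ioc (0:ℝ) 1, HasDerivWithinAt (fun t : ℝ => (t:ℂ) ^ 3 * φ₁ t) (g s) (Ioc 0 1) s) ∧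
  ContinuousOn g (Ioc 0 1) ∧
  IntegrableOn (fun s => s ^ 3 * ‖φ s‖ ^ 2) (Ioc 0 1) ∧
  IntegrableOn (fun s => (s ^ 3)⁻¹ * ‖g s‖ ^ 2) (Ioc 0 1)

theorem memDomT_bounds (φ φ₁ g : ℝ → ℂ) (h : MemDomT φ φ₁ g) :
    ∃ C : ℝ, 0 ≤ C ∧ ∀ s ∈ Ioc (0:ℝ) 1, ‖(s:ℂ) ^ 3 * φ₁ s‖ ≤ C * s ^ 2 ∧ ‖φ s‖ ≤ C / s := by
  obtain ⟨h1, h2, h3, h4, h5, h6⟩ := h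
  have hg : IntegrableOn g (Ioc 0 1) := by
    have hdom : IntegrableOn (fun s : ℝ => s ^ 3 + (s ^ 3)⁻¹ * ‖g s‖ ^ 2) (Ioc 0 1) := by
      refine IntegrableOn.add ?_ h6
      exact ((continuous_pow 3).integrableOn_Icc).mono_set Ioc_subset_Icc_self
    refine Integrable.mono' hdom (h4.aestronglyMeasurable measurableSet_Ioc) ?_
    filter_upwards [ae_restrict_mem measurableSet_Ioc] with s hs
    have hs0 : 0 < s := hs.1
    have hs3 : 0 < s ^ 3 := pow_pos hs.1 3
    have key : s ^ 3 + (s ^ 3)⁻¹ * ‖g s‖ ^ 2 - ‖g s‖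
        = (s ^ 3)⁻¹ * ((s ^ 3 - ‖g s‖ / 2) ^ 2 + 3 / 4 * ‖g s‖ ^ 2) := by
      field_simp
      ring
    have : 0 ≤ (s ^ 3)⁻¹ * ((s ^ 3 - ‖g s‖ / 2) ^ 2 + 3 / 4 * ‖g s‖ ^ 2) := by positivity
    linarith
  set M := ∫ s in Ioc (0:ℝ) 1, (s ^ 3)⁻¹ * ‖g s‖ ^ 2 with hM
  have hM0 : 0 ≤ M := setIntegral_nonneg measurableSet_Ioc (fun s hs => by
    have := pow_pos hs.1 3
    positivity)
  set p : ℝ → ℂ := fun t => (t:ℂ) ^ 3 * φ₁ t with hp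
  have hpc : ContinuousOn p (Ioc 0 1) := fun s hs => (h3 s hs).continuousWithinAt
  have hgi : ∀ a b : ℝ, 0 ≤ a → a ≤ b → b ≤ 1 → IntervalIntegrable g volume a b := by
    intro a b ha hab hb
    rw [intervalIntegrable_iff_integrableOn_Ioc_of_le hab]
    exact hg.mono_set (Ioc_subset_Ioc ha hb)
  obtain ⟨p0, hp0⟩ : ∃ p0 : ℂ, ∀ s ∈ Ioc (0:ℝ) 1, p s - p0 = ∫ t in (0:ℝ)..s, g t := by
    refine ⟨p 1 - ∫ t in (0:ℝ)..1, g t, fun s hs => ?_⟩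
    have hsub : Icc s 1 ⊆ Ioc 0 1 := fun x hx => ⟨hs.1.trans_le hx.1, hx.2⟩
    have e1 : ∫ t in s..1, g t = p 1 - p s := by
      refine intervalIntegral.integral_eq_sub_of_hasDerivAt_of_le hs.2 (hpc.mono hsub) ?_
        (hgi s 1 hs.1.le hs.2 le_rfl)
      intro x hx
      exact (h3 x (hsub (Ioo_subset_Icc_self hx))).hasDerivAt
        (Ioc_mem_nhds (hs.1.trans hx.1) hx.2)
    have e2 := intervalIntegral.integral_add_adjacent_intervals (hgi 0 s le_rfl hs.1.le hs.2)
      (hgi s 1 hs.1.le hs.2 le_rfl)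
    rw [← e2, e1]
    ring
  have hpb : ∀ s ∈ Ioc (0:ℝ) 1, ‖p s - p0‖ ≤ (1 + M) * s ^ 2 := by
    intro s hs
    have hs0 := hs.1
    have hsub : Ioc 0 s ⊆ Ioc (0:ℝ) 1 := Ioc_subset_Ioc le_rfl hs.2
    rw [hp0 s hs, intervalIntegral.integral_of_le hs.1.le]
    have i1 : IntegrableOn (fun _ : ℝ => s) (Ioc 0 s) := by
      simp
    have i2 : IntegrableOn (fun t : ℝ => s ^ 2 * ((t ^ 3)⁻¹ * ‖g t‖ ^ 2)) (Ioc 0 s) :=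
      (h6.mono_set hsub).const_mul _
    have b1 : ‖∫ t in Ioc 0 s, g t‖
        ≤ ∫ t in Ioc 0 s, (s + s ^ 2 * ((t ^ 3)⁻¹ * ‖g t‖ ^ 2)) := by
      refine norm_integral_le_of_norm_le (i1.add i2) ?_
      filter_upwards [ae_restrict_mem measurableSet_Ioc] with t ht
      have ht0 := ht.1
      have ht3 : 0 < t ^ 3 := pow_pos ht.1 3
      have key : t ^ 3 / s ^ 2 + s ^ 2 * ((t ^ 3)⁻¹ * ‖g t‖ ^ 2) - ‖g t‖
          = (t ^ 3)⁻¹ * ((t ^ 3 / s - s * ‖g t‖ / 2) ^ 2 + 3 / 4 * (s * ‖g t‖) ^ 2) := by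
        field_simp
        ring
      have : 0 ≤ (t ^ 3)⁻¹ * ((t ^ 3 / s - s * ‖g t‖ / 2) ^ 2 + 3 / 4 * (s * ‖g t‖) ^ 2) := by
        positivity
      have : t ^ 3 / s ^ 2 ≤ s := by
        rw [div_le_iff₀ (by positivity)]
        calc t ^ 3 ≤ s ^ 3 := pow_le_pow_left₀ ht.1.le ht.2 3
          _ = s * s ^ 2 := by ring
      linarith
    have b2 : ∫ t in Ioc 0 s, (t ^ 3)⁻¹ * ‖g t‖ ^ 2 ≤ M := by
      refine setIntegral_mono_set h6 ?_ hsub.eventuallyLE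
      filter_upwards [ae_restrict_mem measurableSet_Ioc] with t ht
      have ht3 : 0 < t ^ 3 := pow_pos ht.1 3
      simp only [Pi.zero_apply]
      positivity
    rw [integral_add i1 i2, integral_const_mul] at b1
    have b3 : ∫ _ in Ioc 0 s, s = s * s := by
      simp [hs.1.le]
    rw [b3] at b1
    nlinarith [mul_le_mul_of_nonneg_left b2 (sq_nonneg s)]
  set ψ : ℝ → ℂ := fun s => φ s + p0 / 2 * (((s ^ 2)⁻¹ : ℝ) : ℂ) with hψ
  have hψd : ∀ s ∈ Ioc (0:ℝ) 1,
      HasDerivWithinAt ψ ((p s - p0) / (s:ℂ) ^ 3) (Ioc 0 1) s := by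
    intro s hs
    have hs0 : s ≠ 0 := hs.1.ne'
    have hsc : (s:ℂ) ≠ 0 := by exact_mod_cast hs0
    have d1 : HasDerivAt (fun s : ℝ => (s ^ 2)⁻¹) (-(2 * s) / (s ^ 2) ^ 2) s := by
      simpa using (hasDerivAt_pow 2 s).fun_inv (pow_ne_zero 2 hs0)
    have d2 := (d1.ofReal_comp.const_mul (p0 / 2)).hasDerivWithinAt (s := Ioc 0 1)
    refine ((h1 s hs).add d2).congr_deriv ?_
    simp only [hp]
    push_cast
    field_simp
    ring
  have hψb : ∀ s ∈ Ioc (0:ℝ) 1, ‖ψ s‖ ≤ (‖ψ 1‖ + (1 + M)) / s := by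
    intro s hs
    have hs0 := hs.1
    have hsub : Icc s 1 ⊆ Ioc 0 1 := fun x hx => ⟨hs.1.trans_le hx.1, hx.2⟩
    have mv : ‖ψ s - ψ 1‖ ≤ (1 + M) / s * ‖s - 1‖ := by
      refine Convex.norm_image_sub_le_of_norm_hasDerivWithin_le
        (fun x hx => (hψd x (hsub hx)).mono hsub) ?_ (convex_Icc s 1)
        (right_mem_Icc.2 hs.2) (left_mem_Icc.2 hs.2)
      intro x hx
      have hx0 : 0 < x := (hsub hx).1
      rw [norm_div, norm_pow, Complex.norm_real, Real.norm_of_nonneg hx0.le]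
      calc ‖p x - p0‖ / x ^ 3 ≤ (1 + M) * x ^ 2 / x ^ 3 := by
            gcongr
            exact hpb x (hsub hx)
        _ = (1 + M) / x := by field_simp
        _ ≤ (1 + M) / s := by
            gcongr
            exact hx.1
    have n1 : ‖s - 1‖ ≤ 1 := by
      rw [Real.norm_eq_abs, abs_le]
      constructor <;> linarith [hs.1, hs.2]
    have n2 : (1 + M) / s * ‖s - 1‖ ≤ (1 + M) / s := mul_le_of_le_one_right (by positivity) n1
    have n3 : ‖ψ 1‖ ≤ ‖ψ 1‖ / s := le_div_self (norm_nonneg _) hs.1 hs.2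
    have n4 : ‖ψ s‖ ≤ ‖ψ s - ψ 1‖ + ‖ψ 1‖ := by
      simpa using norm_add_le (ψ s - ψ 1) (ψ 1)
    rw [add_div]
    linarith
  set D := ‖ψ 1‖ + (1 + M) with hD
  have hD0 : 0 ≤ D := by positivity
  have hz : p0 = 0 := by
    by_contra hne
    have hpos : 0 < ‖p0‖ := norm_pos_iff.2 hne
    have hint : IntegrableOn (fun s : ℝ => 8 / ‖p0‖ ^ 2 * (s ^ 3 * ‖φ s‖ ^ 2 + D ^ 2 * s))
        (Ioc 0 1) := by
      refine Integrable.const_mul (Integrable.add h5 ?_) _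
      exact ((continuous_const.mul continuous_id).integrableOn_Icc).mono_set Ioc_subset_Icc_self
    have hinv : IntegrableOn (fun s : ℝ => s⁻¹) (Ioc 0 1) := by
      refine Integrable.mono' hint measurable_inv.aestronglyMeasurable ?_
      filter_upwards [ae_restrict_mem measurableSet_Ioc] with s hs
      have hs0 := hs.1
      rw [Real.norm_of_nonneg (by positivity)]
      have e : p0 / 2 * (((s ^ 2)⁻¹ : ℝ) : ℂ) = ψ s - φ s := by simp [hψ]
      have e2 : ‖p0‖ / 2 * (s ^ 2)⁻¹ ≤ ‖φ s‖ + D / s := by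
        have := norm_sub_le (ψ s) (φ s)
        rw [← e, norm_mul, norm_div, Complex.norm_real,
          Real.norm_of_nonneg (by positivity : (0:ℝ) ≤ (s ^ 2)⁻¹)] at this
        simp only [Complex.norm_ofNat] at this
        linarith [hψb s hs]
      have e3 : (‖p0‖ / 2 * (s ^ 2)⁻¹) ^ 2 ≤ 2 * (‖φ s‖ ^ 2 + (D / s) ^ 2) := by
        calc (‖p0‖ / 2 * (s ^ 2)⁻¹) ^ 2 ≤ (‖φ s‖ + D / s) ^ 2 := by gcongr
          _ ≤ _ := by nlinarith [sq_nonneg (‖φ s‖ - D / s)]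
      have e4 : s⁻¹ = 4 / ‖p0‖ ^ 2 * s ^ 3 * (‖p0‖ / 2 * (s ^ 2)⁻¹) ^ 2 := by
        field_simp
        try norm_num
      have e5 : 8 / ‖p0‖ ^ 2 * (s ^ 3 * ‖φ s‖ ^ 2 + D ^ 2 * s)
          = 4 / ‖p0‖ ^ 2 * s ^ 3 * (2 * (‖φ s‖ ^ 2 + (D / s) ^ 2)) := by
        field_simp
        try ring
      rw [e5, e4]
      gcongr
    have := (intervalIntegrable_iff_integrableOn_Ioc_of_le (zero_le_one' ℝ)).2 hinv
    rw [intervalIntegrable_inv_iff] at this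
    simp at this
  refine ⟨D, hD0, fun s hs => ⟨?_, ?_⟩⟩
  · have := hpb s hs
    rw [hz, sub_zero] at this
    refine this.trans ?_
    gcongr
    rw [hD]
    linarith [norm_nonneg (ψ 1)]
  · have := hψb s hs
    simpa [hψ, hz] using this

/-- For two functions `φ, χ` in the domain of the singular Sturm–Liouville
operator, the Lagrange bracket `s³ φ'(s) conj(χ(s)) - φ(s) s³ conj(χ'(s))` tends to `0`
as `s → 0⁺`. -/
theorem lagrange_bracket_vanishes_at_zero
    (φ φ₁ gφ : ℝ → ℂ) (hφ : MemDomT φ φ₁ gφ)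
    (χ χ₁ gχ : ℝ → ℂ) (hχ : MemDomT χ χ₁ gχ) :
    Tendsto
      (fun s : ℝ => (s:ℂ) ^ 3 * φ₁ s * (starRingEnd ℂ) (χ s)
        - φ s * (s:ℂ) ^ 3 * (starRingEnd ℂ) (χ₁ s))
      (nhdsWithin 0 (Ioc 0 1)) (nhds 0) := by
  obtain ⟨C, hC, hb⟩ := memDomT_bounds φ φ₁ gφ hφ
  obtain ⟨C', hC', hb'⟩ := memDomT_bounds χ χ₁ gχ hχ
  refine squeeze_zero_norm' (a := fun s : ℝ => 2 * (C * C') * s) ?_ ?_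
  · filter_upwards [self_mem_nhdsWithin] with s hs
    have hs0 : 0 < s := hs.1
    obtain ⟨a1, a2⟩ := hb s hs
    obtain ⟨b1, b2⟩ := hb' s hs
    have t1 : ‖(s:ℂ) ^ 3 * φ₁ s * (starRingEnd ℂ) (χ s)‖ ≤ C * s ^ 2 * (C' / s) := by
      rw [norm_mul, RCLike.norm_conj]
      gcongr
    have t2 : ‖φ s * (s:ℂ) ^ 3 * (starRingEnd ℂ) (χ₁ s)‖ ≤ C / s * (C' * s ^ 2) := by
      rw [mul_assoc, norm_mul, norm_mul ((s:ℂ) ^ 3), RCLike.norm_conj, ← norm_mul]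
      gcongr
    have t3 : C * s ^ 2 * (C' / s) = C * C' * s := by field_simp
    have t4 : C / s * (C' * s ^ 2) = C * C' * s := by field_simp
    refine (norm_sub_le _ _).trans ?_
    linarith
  · have : Continuous (fun s : ℝ => 2 * (C * C') * s) := by fun_prop
    have := this.tendsto 0
    rw [mul_zero] at this
    exact this.mono_left nhdsWithin_le_nhds
end

section
/- Let φ : (0, 1] → ℂ be continuously differentiable, assume that the map s ↦ s³φ′(s) is continuously differentiable on (0, 1], and assume the two integrability conditions ∫₀¹ s³|φ(s)|² ds < ∞ and ∫₀¹ s⁻³ |(d/ds)(s³φ′(s))|² ds < ∞. Then ∫₀¹ s³|φ′(s)|² ds < ∞ and the integration-by-parts identity ∫₀¹ ( −(d/ds)(s³φ′(s)) )·conj(φ(s)) ds = ∫₀¹ s³|φ′(s)|² ds − φ′(1)·conj(φ(1)) holds; in particular no boundary contribution arises at the singular endpoint s = 0. -/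
open Set MeasureTheory Filter

theorem aux_ftc (F f : ℝ → ℂ) (a : ℝ) (ha : 0 < a) (ha1 : a ≤ 1)
    (h : ∀ s ∈ Ioc (0:ℝ) 1, HasDerivWithinAt F (f s) (Ioc 0 1) s)
    (hf : IntegrableOn f (Ioc 0 1)) : ∫ t in a..1, f t = F 1 - F a := by
  have hsub : Icc a 1 ⊆ Ioc 0 1 := fun t ht => ⟨ha.trans_le ht.1, ht.2⟩
  apply intervalIntegral.integral_eq_sub_of_hasDerivAt_of_le ha1
  · intro t ht
    exact ((h t (hsub ht)).continuousWithinAt).mono hsub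
  · intro t ht
    exact (h t (hsub ⟨ht.1.le, ht.2.le⟩)).hasDerivAt (Ioc_mem_nhds (ha.trans ht.1) ht.2)
  · rw [intervalIntegrable_iff_integrableOn_Ioc_of_le ha1]
    exact hf.mono_set (Ioc_subset_Icc_self.trans hsub)

theorem aux_amgm (x y p : ℝ) (hp : 0 < p) : x * y ≤ p⁻¹ * x ^ 2 + p * y ^ 2 := by
  have h : p⁻¹ * x ^ 2 + p * y ^ 2 - x * y = p⁻¹ * ((x - p * y / 2) ^ 2 + 3 / 4 * (p * y) ^ 2) := by
    field_simp
    ring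
  have : 0 ≤ p⁻¹ * ((x - p * y / 2) ^ 2 + 3 / 4 * (p * y) ^ 2) := by positivity
  linarith

theorem aux_bound (ψ ψ₁ : ℝ → ℂ) (C : ℝ) (hC : 0 ≤ C)
    (h : ∀ s ∈ Ioc (0:ℝ) 1, HasDerivWithinAt ψ (ψ₁ s) (Ioc 0 1) s)
    (hb : ∀ s ∈ Ioc (0:ℝ) 1, ‖ψ₁ s‖ ≤ C / s) :
    ∀ s ∈ Ioc (0:ℝ) 1, ‖ψ s‖ ≤ (‖ψ 1‖ + C) / s := by
  intro s hs
  have hsub : Icc s 1 ⊆ Ioc 0 1 := fun t ht => ⟨hs.1.trans_le ht.1, ht.2⟩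
  have h1 : ‖ψ s - ψ 1‖ ≤ C / s * ‖s - 1‖ := by
    apply (convex_Icc s 1).norm_image_sub_le_of_norm_hasDerivWithin_le
      (fun t ht => (h t (hsub ht)).mono hsub) _ (right_mem_Icc.2 hs.2) (left_mem_Icc.2 hs.2)
    intro t ht
    exact (hb t (hsub ht)).trans (div_le_div_of_nonneg_left hC hs.1 ht.1)
  have h2 : ‖s - 1‖ ≤ 1 := by
    rw [Real.norm_eq_abs, abs_le]; constructor <;> linarith [hs.1, hs.2]
  have h3 : C / s * ‖s - 1‖ ≤ C / s := mul_le_of_le_one_right (div_nonneg hC hs.1.le) h2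
  have h4 : ‖ψ 1‖ ≤ ‖ψ 1‖ / s := le_div_self (norm_nonneg _) hs.1 hs.2
  have h5 : ‖ψ s‖ ≤ ‖ψ s - ψ 1‖ + ‖ψ 1‖ := by
    simpa using norm_add_le (ψ s - ψ 1) (ψ 1)
  rw [add_div]; linarith

/-- For `φ` in the domain of the singular Sturm–Liouville operator,
`∫₀¹ s³ |φ'|² ds < ∞` and the integration-by-parts identity
`∫₀¹ (-(s³φ')') conj(φ) ds = ∫₀¹ s³ |φ'|² ds - φ'(1) conj(φ(1))` holds, with no boundary
contribution at the singular endpoint `s = 0`. -/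
theorem integration_by_parts_no_boundary_term
    (φ φ₁ g : ℝ → ℂ) (hφ : MemDomT φ φ₁ g) :
    IntegrableOn (fun s => s ^ 3 * ‖φ₁ s‖ ^ 2) (Ioc 0 1) ∧
    ∫ s in Ioc (0:ℝ) 1, (-(g s)) * (starRingEnd ℂ) (φ s) =
      ((∫ s in Ioc (0:ℝ) 1, s ^ 3 * ‖φ₁ s‖ ^ 2 : ℝ) : ℂ)
        - φ₁ 1 * (starRingEnd ℂ) (φ 1) := by
  obtain ⟨hd, hc1, hw, hcg, hi1, hi2⟩ := hφ
  have hm : MeasurableSet (Ioc (0:ℝ) 1) := measurableSet_Ioc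
  have hcφ : ContinuousOn φ (Ioc 0 1) := fun s hs => (hd s hs).continuousWithinAt
  have hmg := hcg.aestronglyMeasurable (μ := volume) hm
  have hmφ := hcφ.aestronglyMeasurable (μ := volume) hm
  have hm1 := hc1.aestronglyMeasurable (μ := volume) hm
  have hci : ∀ c : ℝ, IntegrableOn (fun _ : ℝ => c) (Ioc (0:ℝ) 1) := fun c => by
    simp
  -- g is integrable, with quantitative bound
  have hgb : ∀ s ∈ Ioc (0:ℝ) 1, ∀ t ∈ Ioc (0:ℝ) s,
      ‖g t‖ ≤ s ^ 2 * ((t ^ 3)⁻¹ * ‖g t‖ ^ 2) + s := by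
    intro s hs t ht
    have ht0 := ht.1
    have hs0 := hs.1
    have h1 := aux_amgm ‖g t‖ 1 (t ^ 3 / s ^ 2) (by positivity)
    have h2 : t ^ 3 / s ^ 2 ≤ s := by
      rw [div_le_iff₀ (by positivity)]
      calc t ^ 3 ≤ s ^ 3 := pow_le_pow_left₀ ht0.le ht.2 3
        _ = s * s ^ 2 := by ring
    rw [inv_div, mul_one, one_pow, mul_one] at h1
    calc ‖g t‖ ≤ s ^ 2 / t ^ 3 * ‖g t‖ ^ 2 + t ^ 3 / s ^ 2 := h1
      _ ≤ s ^ 2 / t ^ 3 * ‖g t‖ ^ 2 + s := by linarith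
      _ = _ := by rw [div_eq_mul_inv, mul_assoc]
  have hgi : IntegrableOn g (Ioc 0 1) := by
    refine Integrable.mono' ((hi2.const_mul (1 ^ 2)).add (hci 1)) hmg ?_
    filter_upwards [ae_restrict_mem hm] with t ht
    exact hgb 1 (by simp) t ht
  set K := ∫ t in Ioc (0:ℝ) 1, (t ^ 3)⁻¹ * ‖g t‖ ^ 2 with hK
  have hK0 : 0 ≤ K := by
    apply setIntegral_nonneg hm
    intro t ht
    have := ht.1
    positivity
  set w : ℝ → ℂ := fun t : ℝ => (t:ℂ) ^ 3 * φ₁ t with hwdef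
  set c : ℂ := w 1 - ∫ t in (0:ℝ)..1, g t with hc
  have hgii : ∀ a b : ℝ, 0 ≤ a → a ≤ b → b ≤ 1 → IntervalIntegrable g volume a b := by
    intro a b ha hab hb
    rw [intervalIntegrable_iff_integrableOn_Ioc_of_le hab]
    exact hgi.mono_set (Ioc_subset_Ioc ha hb)
  have hwc : ∀ s ∈ Ioc (0:ℝ) 1, ‖w s - c‖ ≤ (K + 1) * s ^ 2 := by
    intro s hs
    have h1 := aux_ftc w g s hs.1 hs.2 hw hgi
    have h2 := intervalIntegral.integral_add_adjacent_intervals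
      (hgii 0 s le_rfl hs.1.le hs.2) (hgii s 1 hs.1.le hs.2 le_rfl)
    have h3 : w s - c = ∫ t in (0:ℝ)..s, g t := by
      rw [hc, ← h2, h1]; ring
    have hsub : Ioc 0 s ⊆ Ioc (0:ℝ) 1 := Ioc_subset_Ioc le_rfl hs.2
    rw [h3, intervalIntegral.integral_of_le hs.1.le]
    have h4 : ‖∫ t in Ioc 0 s, g t‖ ≤ ∫ t in Ioc 0 s, (s ^ 2 * ((t ^ 3)⁻¹ * ‖g t‖ ^ 2) + s) := by
      apply norm_integral_le_of_norm_le
      · exact ((hi2.const_mul (s ^ 2)).add (hci s)).mono_measure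
          (Measure.restrict_mono hsub le_rfl)
      · filter_upwards [ae_restrict_mem measurableSet_Ioc] with t ht
        exact hgb s hs t ht
    have h5 : ∫ t in Ioc 0 s, (s ^ 2 * ((t ^ 3)⁻¹ * ‖g t‖ ^ 2) + s)
        = s ^ 2 * (∫ t in Ioc 0 s, ((t ^ 3)⁻¹ * ‖g t‖ ^ 2)) + s * s := by
      rw [integral_add ((hi2.mono_set hsub).const_mul (s ^ 2)) ((hci s).mono_set hsub),
        integral_const_mul]
      simp [hs.1.le]
    have h6 : (∫ t in Ioc 0 s, ((t ^ 3)⁻¹ * ‖g t‖ ^ 2)) ≤ K := by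
      apply setIntegral_mono_set hi2 _ hsub.eventuallyLE
      filter_upwards [ae_restrict_mem hm] with t ht
      have := ht.1
      simp only [Pi.zero_apply]
      positivity
    have h7 := mul_le_mul_of_nonneg_left h6 (sq_nonneg s)
    rw [h5] at h4
    nlinarith
  -- c = 0
  set C := K + 1 with hCdef
  have hC0 : 0 ≤ C := by positivity
  set ψ : ℝ → ℂ := fun s => φ s + c / 2 * (((s ^ 2)⁻¹ : ℝ) : ℂ) with hψ
  set D := ‖ψ 1‖ + C with hD
  have hD0 : 0 ≤ D := by positivity
  have hψb : ∀ s ∈ Ioc (0:ℝ) 1, ‖ψ s‖ ≤ D / s := by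
    apply aux_bound ψ (fun s => (w s - c) / (s:ℂ) ^ 3) C hC0
    · intro s hs
      have hs0 : s ≠ 0 := hs.1.ne'
      have h1 : HasDerivAt (fun s : ℝ => (s ^ 2)⁻¹) (-(2 * s) / (s ^ 2) ^ 2) s := by
        have h0 := (hasDerivAt_pow 2 s).inv (pow_ne_zero 2 hs0)
        have h0' : HasDerivAt (fun s : ℝ => (s ^ 2)⁻¹) _ s := h0
        exact h0'.congr_deriv (by simp)
      have h2 := (hd s hs).add ((h1.ofReal_comp.const_mul (c / 2)).hasDerivWithinAt (s := Ioc 0 1))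
      refine HasDerivWithinAt.congr_deriv (f := ψ) h2 ?_
      have : (s:ℂ) ≠ 0 := by exact_mod_cast hs0
      simp only [hwdef]
      push_cast
      field_simp
      ring
    · intro s hs
      have hs0 := hs.1
      rw [norm_div, norm_pow, Complex.norm_real, Real.norm_of_nonneg hs0.le,
        div_le_div_iff₀ (by positivity) hs0]
      nlinarith [mul_le_mul_of_nonneg_right (hwc s hs) hs0.le]
  have hc0 : c = 0 := by
    by_contra hne
    have hcn : 0 < ‖c‖ := norm_pos_iff.2 hne
    have hinv : IntegrableOn (fun s : ℝ => s⁻¹) (Ioc 0 1) := by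
      refine Integrable.mono' (((hi1.const_mul 2).add (hci (2 * D ^ 2))).const_mul (4 / ‖c‖ ^ 2))
        measurable_inv.aestronglyMeasurable ?_
      filter_upwards [ae_restrict_mem hm] with s hs
      have hs0 := hs.1
      have h1 : ‖c / 2 * (((s ^ 2)⁻¹ : ℝ) : ℂ)‖ ≤ ‖φ s‖ + D / s := by
        have : c / 2 * (((s ^ 2)⁻¹ : ℝ) : ℂ) = ψ s - φ s := by simp [hψ]
        rw [this]
        linarith [norm_sub_le (ψ s) (φ s), hψb s hs]
      rw [norm_mul, norm_div, Complex.norm_real, Real.norm_of_nonneg (by positivity)] at h1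
      simp only [Complex.norm_ofNat] at h1
      have h2 : (‖c‖ / 2 * (s ^ 2)⁻¹) ^ 2 ≤ 2 * ‖φ s‖ ^ 2 + 2 * (D / s) ^ 2 := by
        have := pow_le_pow_left₀ (by positivity) h1 2
        nlinarith [sq_nonneg (‖φ s‖ - D / s)]
      have h3 := mul_le_mul_of_nonneg_left h2 (pow_nonneg hs0.le 3)
      have h4 : s ^ 3 * (‖c‖ / 2 * (s ^ 2)⁻¹) ^ 2 = ‖c‖ ^ 2 / 4 * s⁻¹ := by
        field_simp; ring
      have h5 : s ^ 3 * (2 * ‖φ s‖ ^ 2 + 2 * (D / s) ^ 2)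
          = 2 * (s ^ 3 * ‖φ s‖ ^ 2) + 2 * D ^ 2 * s := by
        field_simp
      have h6 : 2 * D ^ 2 * s ≤ 2 * D ^ 2 := mul_le_of_le_one_right (by positivity) hs.2
      rw [h4, h5] at h3
      rw [Real.norm_of_nonneg (by positivity)]
      simp only [Pi.add_apply]
      calc s⁻¹ = 4 / ‖c‖ ^ 2 * (‖c‖ ^ 2 / 4 * s⁻¹) := by field_simp
        _ ≤ _ := mul_le_mul_of_nonneg_left (by linarith) (by positivity)
    rw [← intervalIntegrable_iff_integrableOn_Ioc_of_le zero_le_one,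
      intervalIntegrable_inv_iff] at hinv
    simp at hinv
  have hφb : ∀ s ∈ Ioc (0:ℝ) 1, ‖φ s‖ ≤ D / s := by
    intro s hs
    simpa [hψ, hc0] using hψb s hs
  have hwb : ∀ s ∈ Ioc (0:ℝ) 1, ‖w s‖ ≤ C * s ^ 2 := by
    intro s hs
    simpa [hc0] using hwc s hs
  have hφ1b : ∀ s ∈ Ioc (0:ℝ) 1, s ^ 3 * ‖φ₁ s‖ ≤ C * s ^ 2 := by
    intro s hs
    have := hwb s hs
    simp only [hwdef] at this
    rwa [norm_mul, norm_pow, Complex.norm_real, Real.norm_of_nonneg hs.1.le] at this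
  have hint : IntegrableOn (fun s => s ^ 3 * ‖φ₁ s‖ ^ 2) (Ioc 0 1) := by
    refine Integrable.mono' (hci (C ^ 2)) ?_ ?_
    · exact (ContinuousOn.mul (by fun_prop) (hc1.norm.pow 2)).aestronglyMeasurable hm
    · filter_upwards [ae_restrict_mem hm] with s hs
      have hs0 := hs.1
      rw [Real.norm_of_nonneg (by positivity)]
      have h1 : s * ‖φ₁ s‖ ≤ C := by
        have := hφ1b s hs
        have h2 : s ^ 2 * (s * ‖φ₁ s‖) ≤ s ^ 2 * C := by linarith
        exact le_of_mul_le_mul_left h2 (by positivity)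
      have h2 := pow_le_pow_left₀ (by positivity) h1 2
      calc s ^ 3 * ‖φ₁ s‖ ^ 2 = s * (s * ‖φ₁ s‖) ^ 2 := by ring
        _ ≤ 1 * (s * ‖φ₁ s‖) ^ 2 := mul_le_mul_of_nonneg_right hs.2 (by positivity)
        _ ≤ C ^ 2 := by linarith
  refine ⟨hint, ?_⟩
  have hgφ : IntegrableOn (fun s => g s * (starRingEnd ℂ) (φ s)) (Ioc 0 1) := by
    refine Integrable.mono' (hi2.add hi1) ?_ ?_
    · exact (hcg.mul (Complex.continuous_conj.comp_continuousOn hcφ)).aestronglyMeasurable hm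
    · filter_upwards [ae_restrict_mem hm] with s hs
      rw [norm_mul, RCLike.norm_conj]
      exact aux_amgm _ _ _ (pow_pos hs.1 3)
  have hintC : IntegrableOn (fun s => ((s ^ 3 * ‖φ₁ s‖ ^ 2 : ℝ) : ℂ)) (Ioc 0 1) := hint.ofReal
  have hF : ∫ s in (0:ℝ)..1, (g s * (starRingEnd ℂ) (φ s) + ((s ^ 3 * ‖φ₁ s‖ ^ 2 : ℝ) : ℂ))
      = w 1 * (starRingEnd ℂ) (φ 1) - w 0 * (starRingEnd ℂ) (φ 0) := by
    apply intervalIntegral.integral_eq_sub_of_hasDerivAt_of_le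
      (f := fun s => w s * (starRingEnd ℂ) (φ s)) zero_le_one
    · intro s hs
      rcases hs.1.eq_or_lt with h0 | h0
      · subst h0
        have hw0 : w 0 = 0 := by simp [hwdef]
        unfold ContinuousWithinAt
        simp only [hw0, zero_mul]
        apply squeeze_zero_norm' (a := fun s : ℝ => C * D * s)
        · filter_upwards [self_mem_nhdsWithin] with t ht
          rcases ht.1.eq_or_lt with h | h
          · subst h; simp [hw0]
          · rw [norm_mul, RCLike.norm_conj]
            calc ‖w t‖ * ‖φ t‖ ≤ (C * t ^ 2) * (D / t) :=
                  mul_le_mul (hwb t ⟨h, ht.2⟩) (hφb t ⟨h, ht.2⟩) (norm_nonneg _) (by positivity)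
              _ = C * D * t := by field_simp
        · have : ContinuousWithinAt (fun s : ℝ => C * D * s) (Icc 0 1) 0 := by fun_prop
          simpa [ContinuousWithinAt] using this
      · have hs' : s ∈ Ioc (0:ℝ) 1 := ⟨h0, hs.2⟩
        have h1 : ContinuousWithinAt (fun s => w s * (starRingEnd ℂ) (φ s)) (Ioc 0 1) s :=
          (hw s hs').continuousWithinAt.mul
            (Complex.continuous_conj.continuousAt.comp_continuousWithinAt (hcφ s hs'))
        apply h1.mono_of_mem_nhdsWithin
        rw [mem_nhdsWithin]
        exact ⟨Ioi 0, isOpen_Ioi, h0, fun t ht => ⟨ht.1, ht.2.2⟩⟩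
    · intro s hs
      have hs' : s ∈ Ioc (0:ℝ) 1 := ⟨hs.1, hs.2.le⟩
      have hn := Ioc_mem_nhds hs.1 hs.2
      have h1 := (hw s hs').hasDerivAt hn
      have h2 := ((hd s hs').hasDerivAt hn).star
      refine HasDerivAt.congr_deriv (f := fun s => w s * (starRingEnd ℂ) (φ s)) (h1.mul h2) ?_
      have h3 : φ₁ s * star (φ₁ s) = ((‖φ₁ s‖ ^ 2 : ℝ) : ℂ) := by
        simpa using Complex.mul_conj' (φ₁ s)
      simp only [hwdef, mul_assoc, h3]
      push_cast
      rfl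
    · rw [intervalIntegrable_iff_integrableOn_Ioc_of_le zero_le_one]
      exact hgφ.add hintC
  rw [intervalIntegral.integral_of_le zero_le_one, integral_add hgφ hintC, integral_complex_ofReal] at hF
  simp only [neg_mul, integral_neg]
  simp only [hwdef] at hF
  simp only [Complex.ofReal_one, one_pow, one_mul, Complex.ofReal_zero] at hF
  linear_combination -hF
end
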